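/- Let {R_α}_{α∈I} be a family of G-graded commutative rings and let R = Π_{α∈I} R_α with the product grading R_σ = Π_α (R_α)_σ. Then R is an EM-G-graded ring if and only if each R_α is an EM-G-graded ring. -/

import Mathlib

/-!
A polynomial over `∏ R_α` is a family of polynomials over the `R_α` of bounded degree, and it is
regular iff all its components are. If the product is EM-graded, extending a homogeneous polynomial
over `R_α` by zero and projecting a factorization back shows that `R_α` is EM-graded.

For the converse, factor `f_α = c_α g_α` componentwise, with `c_α = 1` when `f_α` is regular and
`g_α = 1` when `f_α = 0`. The `g_α` only assemble to a polynomial if their degrees are bounded, which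
is the real content (`IsEMGGraded.exists_bounded`): in an EM-graded ring a homogeneous zero divisor
`f` of degree at most `n` factors as `c g'` with `g'` regular of degree at most `n + 2`.

Start with any `f = c g`, `g` regular. Then `Ann c = Ann f` is a homogeneous ideal containing the
coefficients of `g` above `n`, hence also the homogeneous components `u` of these coefficients. It
suffices to find two elements `d, h ∈ Ann c` such that `y d = y h = 0` forces each `u` to act
nilpotently on `y`: if also `y g_i = 0` for `i ≤ n`, then `g` is nilpotent modulo `Ann y`, so a power
of the regular polynomial `g` kills `y`, and `y = 0`. By McCoy's theorem
`g' = g_0 + ⋯ + g_n X ^ n + d X ^ (n + 1) + h X ^ (n + 2)` is then regular, and `f = c g'`.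

* The `u` of finite-order degree have powers of degree zero. Those are the coefficients of a single
  homogeneous polynomial, and its EM factorization yields `d`.
* The `u` of infinite-order degree are combined into `h = ∑ u ^ t_u` with suitable exponents
  (`exists_common_killer`). Adding one term at a time, it is enough that whatever kills `h + u ^ t`
  is killed by a power of `u` when `t` is large (`exists_pow_add_pow`). The group `G` need not be
  abelian, but homogeneous elements of non-commuting degrees have product zero, so all degree
  computations take place in abelian subgroups, where degrees are compared through a homomorphism to
  `ℚ` sending the degree of `u` to `1`.
-/

open Polynomial

/-- `R` (with grading `𝒜`) is an EM-`G`-graded ring. -/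
def IsEMGGraded {G R : Type*} [CommRing R] (𝒜 : G → AddSubgroup R) : Prop :=
  ∀ f : R[X], f ≠ 0 → (∃ σ : G, ∀ i, f.coeff i ∈ 𝒜 σ) → f ∉ nonZeroDivisors R[X] →
    ∃ (c : R) (g : R[X]), c ∉ nonZeroDivisors R ∧ g ∈ nonZeroDivisors R[X] ∧ f = C c * g

/-! ### Elements of infinite-order degree -/

/-- Translates by large multiples of an element `ρ` of infinite order outrun sums of elements of a
finite commuting set `S ∋ ρ`: once `t` is large, `δ + (t k) ρ` is a sum of `k` elements of `S` for
only boundedly many `k`. The bound comes from a homomorphism to `ℚ` on the abelian subgroup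
generated by `S` taking `ρ` to `1`. -/
lemma exists_growth_bound {G : Type*} [AddGroup G] (S : Finset G)
    (hcomm : ∀ a ∈ S, ∀ b ∈ S, a + b = b + a) (ρ : G) (hρS : ρ ∈ S) (hρ : addOrderOf ρ = 0) :
    ∃ t₀ : ℕ, ∀ t ≥ t₀, ∀ δ : G, ∃ K : ℕ, ∀ k ≥ K, ∀ l : List G, (∀ e ∈ l, e ∈ S) →
      l.length = k → δ + (t * k) • ρ ≠ l.sum := by
  classical
  let Λ := AddSubgroup.closure (S : Set G)
  have hSΛ : ∀ e ∈ S, e ∈ Λ := fun e he => AddSubgroup.subset_closure he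
  have : IsAddCommutative Λ := AddSubgroup.isAddCommutative_closure hcomm
  let _ : AddCommGroup Λ := { (inferInstance : AddGroup Λ) with
    add_comm := fun a b => IsAddCommutative.is_comm.comm a b }
  let r : Λ := ⟨ρ, hSΛ ρ hρS⟩
  have hr : Function.Injective (zmultiplesHom Λ r) := by
    rw [injective_iff_map_eq_zero]
    intro n hn
    have h1 : n • ρ = 0 := by simpa [r] using congrArg Subtype.val hn
    have h2 := addOrderOf_dvd_iff_zsmul_eq_zero.2 h1
    rw [hρ] at h2
    simpa using h2
  -- Divisibility of `ℚ` extends `n • ρ ↦ n` from the infinite cyclic group `⟨ρ⟩` to `Λ`.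
  obtain ⟨φ, hφ⟩ := (Module.Baer.of_divisible ℚ).extension_property_addMonoidHom
    (zmultiplesHom Λ r) hr (Int.castAddHom ℚ)
  have hφr : φ r = 1 := by simpa using DFunLike.congr_fun hφ 1
  obtain ⟨B, hB⟩ : ∃ B : ℕ, ∀ e (he : e ∈ S), φ ⟨e, hSΛ e he⟩ ≤ B := by
    have hbdd : BddAbove (Set.range fun e : S => φ ⟨e.1, hSΛ e.1 e.2⟩) :=
      (Set.finite_range _).bddAbove
    obtain ⟨b, hb⟩ := hbdd
    refine ⟨⌈b⌉₊, fun e he => (hb ?_).trans (Nat.le_ceil b)⟩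
    exact ⟨⟨e, he⟩, rfl⟩
  have hsum : ∀ l : List G, (∀ e ∈ l, e ∈ S) →
      ∃ h : l.sum ∈ Λ, φ ⟨l.sum, h⟩ ≤ (l.length : ℚ) * B := by
    intro l
    induction l with
    | nil =>
      intro _
      refine ⟨Λ.zero_mem, ?_⟩
      have h0 : φ ⟨([] : List G).sum, Λ.zero_mem⟩ = 0 := map_zero φ
      rw [h0, List.length_nil, Nat.cast_zero, zero_mul]
    | cons a l ih =>
      intro hl
      obtain ⟨h, hle⟩ := ih fun e he => hl e (List.mem_cons_of_mem _ he)
      have ha : a ∈ S := hl a List.mem_cons_self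
      refine ⟨by simpa using Λ.add_mem (hSΛ a ha) h, ?_⟩
      have : (⟨(a :: l).sum, by simpa using Λ.add_mem (hSΛ a ha) h⟩ : Λ)
          = ⟨a, hSΛ a ha⟩ + ⟨l.sum, h⟩ := Subtype.ext (by simp)
      rw [this, map_add]
      have := hB a ha
      push_cast [List.length_cons]
      linarith
  refine ⟨B + 1, fun t ht δ => ?_⟩
  by_cases hδ : δ ∈ Λ
  · refine ⟨⌈-φ ⟨δ, hδ⟩⌉₊ + 1, fun k hk l hl hlk heq => ?_⟩
    obtain ⟨h, hle⟩ := hsum l hl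
    have : (⟨l.sum, h⟩ : Λ) = ⟨δ, hδ⟩ + (t * k) • r := Subtype.ext (by simp [r, ← heq])
    rw [this, map_add, map_nsmul, hφr, hlk] at hle
    have h1 := Nat.le_ceil (-φ ⟨δ, hδ⟩)
    have h2 : ((⌈-φ ⟨δ, hδ⟩⌉₊ : ℕ) : ℚ) + 1 ≤ k := by exact_mod_cast hk
    have h3 : ((B : ℚ) + 1) * k ≤ t * k := by
      have : (B : ℚ) + 1 ≤ t := by exact_mod_cast ht
      gcongr
    simp only [nsmul_eq_mul, Nat.cast_mul, mul_one] at hle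
    nlinarith
  · refine ⟨0, fun k _ l hl _ heq => hδ ?_⟩
    obtain ⟨h, -⟩ := hsum l hl
    rw [← heq] at h
    exact (Λ.add_mem_cancel_right (Λ.nsmul_mem (hSΛ ρ hρS) _)).1 h

/-- In a commutative graded ring, homogeneous elements of non-commuting degrees `i`, `j` have
product zero, since it lies in both the `i + j` and the `j + i` component. -/
lemma mul_eq_zero_of_not_commute {G A : Type*} [AddGroup G] [DecidableEq G] [CommRing A]
    (𝒜 : G → AddSubgroup A) [GradedRing 𝒜] {a b : A} {i j : G} (ha : a ∈ 𝒜 i) (hb : b ∈ 𝒜 j)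
    (h : i + j ≠ j + i) : a * b = 0 := by
  by_contra h0
  exact h (DirectSum.degree_eq_of_mem_mem 𝒜 (SetLike.mul_mem_graded ha hb)
    (mul_comm b a ▸ SetLike.mul_mem_graded hb ha) h0)

/-- For `u` homogeneous of infinite-order degree, a sufficiently high power `u ^ t`, depending only
on `h` and `u`, cannot be cancelled by `h`: whatever kills `h + u ^ t` is killed by a power of `u`.
If `y (h + u ^ t) = 0` then `y u ^ (t k) = ± y h ^ k` for all `k`, and for large `k` the two sides
have no degree in common. -/
lemma exists_pow_add_pow {G A : Type*} [AddGroup G] [DecidableEq G] [CommRing A]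
    (𝒜 : G → AddSubgroup A) [GradedRing 𝒜] (h u : A) {ρ : G} (hu : u ∈ 𝒜 ρ)
    (hρ : addOrderOf ρ = 0) :
    ∃ t ≥ 1, ∀ y : A, y * (h + u ^ t) = 0 → ∃ k, u ^ k * y = 0 := by
  classical
  set E := (DirectSum.decompose 𝒜 h).support with hE
  -- `h ^ k` only involves sums of pairwise commuting degrees, so one bound for each commuting
  -- subset of the support of `h` is enough.
  have key : ∀ S : Finset G, ∃ t₀ : ℕ, (∀ a ∈ insert ρ S, ∀ b ∈ insert ρ S, a + b = b + a) →
      ∀ t ≥ t₀, ∀ δ : G, ∃ K : ℕ, ∀ k ≥ K, ∀ l : List G, (∀ e ∈ l, e ∈ insert ρ S) →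
      l.length = k → δ + (t * k) • ρ ≠ l.sum := by
    intro S
    by_cases hc : ∀ a ∈ insert ρ S, ∀ b ∈ insert ρ S, a + b = b + a
    · obtain ⟨t₀, h⟩ := exists_growth_bound (insert ρ S) hc ρ (Finset.mem_insert_self _ _) hρ
      exact ⟨t₀, fun _ => h⟩
    · exact ⟨0, fun h => absurd h hc⟩
  choose t₀ ht₀ using key
  refine ⟨max 1 (E.powerset.sup t₀), le_max_left _ _, fun y hy => ?_⟩
  set t := max 1 (E.powerset.sup t₀)
  set T := (DirectSum.decompose 𝒜 y).support with hT
  have hK : ∀ (x : G × G) (S : Finset G), ∃ K : ℕ, S ∈ E.powerset →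
      (∀ a ∈ insert ρ S, ∀ b ∈ insert ρ S, a + b = b + a) →
      ∀ k ≥ K, ∀ l : List G, (∀ e ∈ l, e ∈ insert ρ S) →
      l.length = k → (-x.2 + x.1) + (t * k) • ρ ≠ l.sum := by
    intro x S
    by_cases hS : S ∈ E.powerset ∧ ∀ a ∈ insert ρ S, ∀ b ∈ insert ρ S, a + b = b + a
    · obtain ⟨K, hK⟩ := ht₀ S hS.2 t ((Finset.le_sup hS.1).trans (le_max_right _ _)) (-x.2 + x.1)
      exact ⟨K, fun _ _ => hK⟩
    · exact ⟨0, fun h1 h2 => absurd ⟨h1, h2⟩ hS⟩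
  choose K hK using hK
  set k := (T ×ˢ T).sup fun x => E.powerset.sup (K x) with hk
  have hkK : ∀ τ ∈ T, ∀ τ' ∈ T, ∀ S ∈ E.powerset, K (τ, τ') S ≤ k := fun τ hτ τ' hτ' S hS =>
    (Finset.le_sup (f := K (τ, τ')) hS).trans
      (Finset.le_sup (f := fun x => E.powerset.sup (K x)) (Finset.mk_mem_product hτ hτ' : (τ, τ') ∈ T ×ˢ T))
  -- The extra factor `u` kills every component of `h` whose degree does not commute with `ρ`.
  refine ⟨t * k + 1, ?_⟩
  have hup : u ^ (t * k + 1) ∈ 𝒜 ((t * k + 1) • ρ) := SetLike.pow_mem_graded _ hu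
  have hyk : y * u ^ (t * k + 1) = y * h ^ k * u * (-1) ^ k := by
    have h1 : ∀ m : ℕ, y * (u ^ t) ^ m = y * (-h) ^ m := by
      intro m
      induction m with
      | zero => simp
      | succ m ih =>
        rw [pow_succ, ← mul_assoc, ih, pow_succ]
        linear_combination (-h) ^ m * hy
    rw [pow_succ, pow_mul, ← mul_assoc, h1, neg_pow]
    ring
  have hsumy := DirectSum.sum_support_decompose 𝒜 y
  have hsumh := DirectSum.sum_support_decompose 𝒜 h
  rw [← hE] at hsumh
  rw [← hT] at hsumy
  let c : G → A := fun e => (DirectSum.decompose 𝒜 h e : A)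
  let d : G → A := fun e => (DirectSum.decompose 𝒜 y e : A)
  have hc : ∀ e, c e ∈ 𝒜 e := fun e => SetLike.coe_mem _
  have hd : ∀ e, d e ∈ 𝒜 e := fun e => SetLike.coe_mem _
  have hhk : h ^ k = ∑ p ∈ Fintype.piFinset (fun _ : Fin k => E), ∏ i, c (p i) := by
    rw [← Finset.prod_univ_sum]
    simp [c, hsumh]
  have hcomp : ∀ τ ∈ T, d τ * u ^ (t * k + 1) = 0 := by
    intro τ hτ
    have e1 : GradedRing.proj 𝒜 (τ + (t * k + 1) • ρ) (y * u ^ (t * k + 1))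
        = d τ * u ^ (t * k + 1) := by
      rw [GradedRing.proj_apply, DirectSum.coe_decompose_mul_add_of_right_mem 𝒜 hup]
    have hterm : ∀ τ' ∈ T, ∀ p ∈ Fintype.piFinset (fun _ : Fin k => E),
        GradedRing.proj 𝒜 (τ + (t * k + 1) • ρ) (d τ' * (∏ i, c (p i)) * u * (-1) ^ k) = 0 := by
      intro τ' hτ' p hp
      have hpE : ∀ i, p i ∈ E := fun i => Fintype.mem_piFinset.1 hp i
      by_cases hz : (∏ i, c (p i)) * u = 0
      · rw [mul_assoc (d τ'), hz]; simp
      have hc1 : ∀ i, p i + ρ = ρ + p i := by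
        intro i
        by_contra hne
        apply hz
        rw [← Finset.mul_prod_erase _ _ (Finset.mem_univ i), mul_right_comm,
          mul_eq_zero_of_not_commute 𝒜 (hc (p i)) hu hne, zero_mul]
      have hc2 : ∀ i j, p i + p j = p j + p i := by
        intro i j
        by_contra hne
        apply hz
        have hij : j ≠ i := by rintro rfl; exact hne rfl
        rw [← Finset.mul_prod_erase _ _ (Finset.mem_univ i),
          ← Finset.mul_prod_erase _ _ (Finset.mem_erase.2 ⟨hij, Finset.mem_univ j⟩),
          ← mul_assoc (c (p i)), mul_eq_zero_of_not_commute 𝒜 (hc (p i)) (hc (p j)) hne,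
          zero_mul, zero_mul]
      set S : Finset G := Finset.univ.image p
      have hSE : S ∈ E.powerset := by
        rw [Finset.mem_powerset]
        intro e he
        obtain ⟨i, -, rfl⟩ := Finset.mem_image.1 he
        exact hpE i
      have hScomm : ∀ a ∈ insert ρ S, ∀ b ∈ insert ρ S, a + b = b + a := by
        intro a ha b hb
        simp only [S, Finset.mem_insert, Finset.mem_image, Finset.mem_univ, true_and] at ha hb
        rcases ha with rfl | ⟨i, rfl⟩ <;> rcases hb with rfl | ⟨j, rfl⟩
        · rfl
        · exact (hc1 j).symm
        · exact hc1 i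
        · exact hc2 i j
      have hne := hK (τ, τ') S hSE hScomm k (hkK τ hτ τ' hτ' S hSE) (List.ofFn p)
        (by
          intro e he
          obtain ⟨i, rfl⟩ := (List.mem_ofFn' _ _).1 he
          exact Finset.mem_insert_of_mem (Finset.mem_image_of_mem _ (Finset.mem_univ i)))
        (List.length_ofFn)
      have hmem : d τ' * (∏ i, c (p i)) * u * (-1) ^ k ∈ 𝒜 (τ' + (List.ofFn p).sum + ρ) := by
        have : d τ' * (∏ i, c (p i)) * u ∈ 𝒜 (τ' + (List.ofFn p).sum + ρ) := by
          rw [← List.prod_ofFn]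
          exact SetLike.mul_mem_graded (SetLike.mul_mem_graded (hd τ')
            (SetLike.list_prod_ofFn_mem_graded p (fun i => c (p i)) fun i => hc _)) hu
        rcases neg_one_pow_eq_or A k with h | h <;> rw [h]
        · simpa using this
        · simpa using this
      rw [GradedRing.proj_apply]
      refine DirectSum.decompose_of_mem_ne 𝒜 hmem fun heq => hne ?_
      rw [succ_nsmul, ← add_assoc] at heq
      have := add_right_cancel heq
      simp only
      rw [add_assoc, ← this]
      simp
    rw [← e1, hyk, hhk]
    conv_lhs => rw [← hsumy]
    simp only [Finset.sum_mul, Finset.mul_sum, map_sum]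
    refine Finset.sum_eq_zero fun p hp => Finset.sum_eq_zero fun τ' hτ' => ?_
    exact hterm _ (by assumption) _ (by assumption)
  rw [mul_comm]
  conv_lhs => rw [← hsumy]
  rw [Finset.sum_mul]
  exact Finset.sum_eq_zero hcomp

/-- The ideal generated by finitely many homogeneous elements of infinite-order degree contains a
single element `h` which controls it up to radical: if `h` kills `y`, so does a power of each
generator. -/
lemma exists_common_killer {G A : Type*} [AddGroup G] [DecidableEq G] [CommRing A]
    (𝒜 : G → AddSubgroup A) [GradedRing 𝒜] (U : Finset A)
    (hU : ∀ u ∈ U, ∃ ρ, u ∈ 𝒜 ρ ∧ addOrderOf ρ = 0) :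
    ∃ h ∈ Ideal.span (U : Set A), ∀ y : A, y * h = 0 → ∀ u ∈ U, ∃ k, u ^ k * y = 0 := by
  classical
  induction U using Finset.induction_on with
  | empty => exact ⟨0, Ideal.zero_mem _, by simp⟩
  | insert u U _ ih =>
    obtain ⟨h, hh, hkill⟩ := ih fun v hv => hU v (Finset.mem_insert_of_mem hv)
    obtain ⟨ρ, hu, hρ⟩ := hU u (Finset.mem_insert_self _ _)
    obtain ⟨t, ht, hstep⟩ := exists_pow_add_pow 𝒜 h u hu hρ
    refine ⟨h + u ^ t, Ideal.add_mem _ (Ideal.span_mono (by simp) hh)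
      (Ideal.pow_mem_of_mem _ (Ideal.subset_span (by simp)) _ ht), fun y hy v hv => ?_⟩
    obtain ⟨k, hk⟩ := hstep y hy
    rcases Finset.mem_insert.1 hv with rfl | hv
    · exact ⟨k, hk⟩
    -- On `y` multiplication by `h` agrees with multiplication by `-u ^ t`, which is nilpotent there.
    have hyk : h ^ k * y = 0 := by
      have h1 : ∀ m : ℕ, h ^ m * y = (-u ^ t) ^ m * y := by
        intro m
        induction m with
        | zero => simp
        | succ m ihm =>
          rw [pow_succ' (-u ^ t), mul_assoc, ← ihm]
          linear_combination h ^ m * hy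
      obtain ⟨s, rfl⟩ := Nat.exists_eq_add_of_le ht
      rw [h1, neg_pow, ← pow_mul, add_mul, one_mul, pow_add]
      linear_combination (-1) ^ k * u ^ (s * k) * hk
    have h2 : ∀ m : ℕ, ∀ z : A, h ^ m * z = 0 → ∃ k, v ^ k * z = 0 := by
      intro m
      induction m with
      | zero => intro z hz; exact ⟨0, by simpa using hz⟩
      | succ m ihm =>
        intro z hz
        obtain ⟨a, ha⟩ := hkill (h ^ m * z) (by rw [← hz]; ring) v hv
        obtain ⟨b, hb⟩ := ihm (v ^ a * z) (by rw [← ha]; ring)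
        exact ⟨b + a, by rw [← hb]; ring⟩
    exact h2 k y hyk

/-! ### Bounding the degree of the regular factor -/

lemma exists_coeff_eq {A : Type*} [CommRing A] (N : ℕ) (a : ℕ → A) :
    ∃ p : A[X], p.natDegree ≤ N ∧ ∀ i, p.coeff i = if i ≤ N then a i else 0 := by
  have hco : ∀ i, (∑ j ∈ Finset.range (N + 1), C (a j) * X ^ j).coeff i
      = if i ≤ N then a i else 0 := by
    intro i
    simp [Polynomial.coeff_C_mul, Polynomial.coeff_X_pow]
  refine ⟨_, ?_, hco⟩
  rw [Polynomial.natDegree_le_iff_coeff_eq_zero]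
  intro i hi
  rw [hco, if_neg (by omega)]

/-- The elements of a finite set are, up to zeros, the coefficients of a polynomial. -/
lemma exists_coeffs_finset {A : Type*} [CommRing A] (V : Finset A) :
    ∃ p : A[X], (∀ i, p.coeff i ∈ V ∨ p.coeff i = 0) ∧ ∀ v ∈ V, ∃ i, p.coeff i = v := by
  classical
  induction V using Finset.induction_on with
  | empty => exact ⟨0, by simp⟩
  | insert v V _ ih =>
    obtain ⟨p, h1, h2⟩ := ih
    refine ⟨p * X + C v, ?_, ?_⟩
    · rintro (_ | i)
      · simp
      · simpa using (h1 i).imp_left Or.inr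
    · intro w hw
      rcases Finset.mem_insert.1 hw with rfl | hw
      · exact ⟨0, by simp⟩
      · obtain ⟨i, hi⟩ := h2 w hw
        exact ⟨i + 1, by simpa using hi⟩

/-- McCoy's theorem: a polynomial whose coefficients have no common nonzero annihilator is
regular. -/
lemma mem_nonZeroDivisors_of_coeff {A : Type*} [CommRing A] (g : A[X])
    (h : ∀ y : A, (∀ i, y * g.coeff i = 0) → y = 0) : g ∈ nonZeroDivisors A[X] := by
  by_contra hg
  obtain ⟨a, ha, hag⟩ := Polynomial.notMem_nonZeroDivisors_iff.1 hg
  exact ha (h a fun i => by simpa using congrArg (fun q => q.coeff i) hag)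

/-- If powers of the coefficients of a regular polynomial `g` kill `y`, then `y = 0`: modulo the
annihilator of `y` the polynomial is nilpotent, so a power of `g` kills `y`. -/
lemma eq_zero_of_pow_mul_coeff {A : Type*} [CommRing A] {g : A[X]}
    (hg : g ∈ nonZeroDivisors A[X]) (y : A)
    (h : ∀ i, g.coeff i ∈ (Ideal.span {y}).annihilator.radical) : y = 0 := by
  set I := (Ideal.span {y}).annihilator
  have hnil : IsNilpotent (g.map (Ideal.Quotient.mk I)) := by
    rw [Polynomial.isNilpotent_iff]
    intro i
    obtain ⟨k, hk⟩ := h i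
    exact ⟨k, by rw [Polynomial.coeff_map, ← map_pow, Ideal.Quotient.eq_zero_iff_mem]; exact hk⟩
  obtain ⟨k, hk⟩ := hnil
  have hk' : C y * g ^ k = 0 := by
    ext i
    rw [← Polynomial.map_pow] at hk
    have h1 := congrArg (fun q => q.coeff i) hk
    simp only [Polynomial.coeff_map, Polynomial.coeff_zero, Ideal.Quotient.eq_zero_iff_mem] at h1
    have := Submodule.mem_annihilator.1 h1 y (Ideal.mem_span_singleton_self y)
    rw [Polynomial.coeff_C_mul, mul_comm]
    simpa using this
  have := (mem_nonZeroDivisors_iff_right.1 (pow_mem hg k)) _ hk'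
  simpa using this

/-- In an EM-`G`-graded ring the regular factor of a homogeneous zero divisor `f` can be chosen with
degree at most `n + 2`, for any `n ≥ deg f`. -/
lemma IsEMGGraded.exists_bounded {G A : Type*} [AddGroup G] [DecidableEq G] [CommRing A]
    (𝒜 : G → AddSubgroup A) [GradedRing 𝒜] (hA : IsEMGGraded 𝒜) (f : A[X]) (hf0 : f ≠ 0)
    (hf : ∃ σ : G, ∀ i, f.coeff i ∈ 𝒜 σ) (hfz : f ∉ nonZeroDivisors A[X]) {n : ℕ}
    (hn : f.natDegree ≤ n) :
    ∃ (c : A) (g : A[X]), c ∉ nonZeroDivisors A ∧ g ∈ nonZeroDivisors A[X] ∧ f = C c * g ∧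
      g.natDegree ≤ n + 2 := by
  classical
  obtain ⟨c, g, hc, hg, hfg⟩ := hA f hf0 hf hfz
  have hcoeff : ∀ i, f.coeff i = c * g.coeff i := fun i => by rw [hfg, Polynomial.coeff_C_mul]
  have hfn : ∀ i, n < i → f.coeff i = 0 := fun i hi =>
    Polynomial.coeff_eq_zero_of_natDegree_lt (hn.trans_lt hi)
  -- As `g` is regular, `c` and `f` have the same annihilator, which is therefore a homogeneous ideal.
  have hann : ∀ y, (∀ i, y * f.coeff i = 0) → c * y = 0 := by
    intro y hy
    have : C (c * y) * g = 0 := by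
      ext i
      rw [Polynomial.coeff_C_mul, Polynomial.coeff_zero, ← hy i, hcoeff]
      ring
    exact C_eq_zero.1 ((mem_nonZeroDivisors_iff_right.1 hg) _ this)
  have hannhom : ∀ y, c * y = 0 → ∀ e, c * (DirectSum.decompose 𝒜 y e : A) = 0 := by
    intro y hy e
    obtain ⟨σ, hσ⟩ := hf
    refine hann _ fun i => ?_
    rw [← DirectSum.coe_decompose_mul_add_of_right_mem 𝒜 (hσ i), hcoeff,
      show y * (c * g.coeff i) = 0 by linear_combination g.coeff i * hy]
    simp
  -- The homogeneous components of the coefficients of `g` in degrees above `n`; all are killed by `c`.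
  let U : Finset A := (Finset.Ioc n g.natDegree).biUnion fun j =>
    (DirectSum.decompose 𝒜 (g.coeff j)).support.image
      fun e => (DirectSum.decompose 𝒜 (g.coeff j) e : A)
  have hUhom : ∀ u ∈ U, ∃ ρ, u ∈ 𝒜 ρ := by
    intro u hu
    obtain ⟨j, -, hj⟩ := Finset.mem_biUnion.1 hu
    obtain ⟨e, -, rfl⟩ := Finset.mem_image.1 hj
    exact ⟨e, SetLike.coe_mem _⟩
  have hUc : ∀ u ∈ U, c * u = 0 := by
    intro u hu
    obtain ⟨j, hj', hj⟩ := Finset.mem_biUnion.1 hu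
    obtain ⟨e, -, rfl⟩ := Finset.mem_image.1 hj
    apply hannhom
    rw [← hcoeff, hfn j (Finset.mem_Ioc.1 hj').1]
  have hUspan : ∀ I : Ideal A, (∀ u ∈ U, u ∈ I) → ∀ j, n < j → g.coeff j ∈ I := by
    intro I hI j hj
    by_cases hjg : j ≤ g.natDegree
    · rw [← DirectSum.sum_support_decompose 𝒜 (g.coeff j)]
      exact I.sum_mem fun e he => hI _ (Finset.mem_biUnion.2
        ⟨j, Finset.mem_Ioc.2 ⟨hj, hjg⟩, Finset.mem_image_of_mem _ he⟩)
    · rw [Polynomial.coeff_eq_zero_of_natDegree_lt (not_le.1 hjg)]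
      exact I.zero_mem
  obtain ⟨h, hhmem, hh⟩ := exists_common_killer 𝒜
    (U.filter fun u => ∃ ρ, u ∈ 𝒜 ρ ∧ addOrderOf ρ = 0) fun u hu => (Finset.mem_filter.1 hu).2
  have hch : c * h = 0 := by
    have : Ideal.span ((U.filter fun u => ∃ ρ, u ∈ 𝒜 ρ ∧ addOrderOf ρ = 0 : Finset A) : Set A)
        ≤ (Ideal.span {c}).annihilator := by
      rw [Ideal.span_le]
      intro u hu
      have := hUc u (Finset.mem_filter.1 hu).1
      exact (Submodule.mem_annihilator_span_singleton _ _).2 (by simpa [mul_comm] using this)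
    have := (Submodule.mem_annihilator_span_singleton _ _).1 (this hhmem)
    simpa [mul_comm] using this
  have htors : ∀ u : A, ∃ m : ℕ, u ∈ U → (¬ ∃ ρ, u ∈ 𝒜 ρ ∧ addOrderOf ρ = 0) →
      m ≠ 0 ∧ u ^ m ∈ 𝒜 0 := by
    intro u
    by_cases hu : u ∈ U ∧ ¬ ∃ ρ, u ∈ 𝒜 ρ ∧ addOrderOf ρ = 0
    · obtain ⟨ρ, hρ⟩ := hUhom u hu.1
      refine ⟨addOrderOf ρ, fun _ _ => ⟨fun h0 => hu.2 ⟨ρ, hρ, h0⟩, ?_⟩⟩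
      have := SetLike.pow_mem_graded (addOrderOf ρ) hρ
      rwa [addOrderOf_nsmul_eq_zero] at this
    · exact ⟨0, fun h1 h2 => absurd ⟨h1, h2⟩ hu⟩
  choose m hm using htors
  -- The powers `u ^ m u` of degree zero form a homogeneous polynomial `p`, and the scalar factor `d`
  -- of `p` has the same annihilator as `p`.
  obtain ⟨d, hcd, hd⟩ : ∃ d, c * d = 0 ∧ ∀ y, y * d = 0 →
      ∀ u ∈ U, (¬ ∃ ρ, u ∈ 𝒜 ρ ∧ addOrderOf ρ = 0) → u ^ m u * y = 0 := by
    obtain ⟨p, hp1, hp2⟩ := exists_coeffs_finset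
      ((U.filter fun u => ¬ ∃ ρ, u ∈ 𝒜 ρ ∧ addOrderOf ρ = 0).image fun u => u ^ m u)
    have hp : ∀ i, p.coeff i ∈ 𝒜 0 ∧ c * p.coeff i = 0 := by
      intro i
      rcases hp1 i with h | h
      · obtain ⟨u, hu, hui⟩ := Finset.mem_image.1 h
        rw [Finset.mem_filter] at hu
        obtain ⟨h1, h2⟩ := hm u hu.1 hu.2
        rw [← hui]
        refine ⟨h2, ?_⟩
        obtain ⟨s, hs⟩ := Nat.exists_eq_succ_of_ne_zero h1
        rw [hs, pow_succ', ← mul_assoc, hUc u hu.1, zero_mul]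
      · rw [h]; exact ⟨(𝒜 0).zero_mem, mul_zero c⟩
    have hpd : ∀ y u, u ∈ U → (¬ ∃ ρ, u ∈ 𝒜 ρ ∧ addOrderOf ρ = 0) → C y * p = 0 →
        u ^ m u * y = 0 := by
      intro y u hu hu' hy
      obtain ⟨i, hi⟩ := hp2 (u ^ m u) (Finset.mem_image_of_mem _ (Finset.mem_filter.2 ⟨hu, hu'⟩))
      rw [← hi, mul_comm, ← Polynomial.coeff_C_mul, hy, Polynomial.coeff_zero]
    have hcp : C c * p = 0 := by
      ext i
      rw [Polynomial.coeff_C_mul, (hp i).2, Polynomial.coeff_zero]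
    by_cases hp0 : p = 0
    · exact ⟨0, mul_zero c, fun y _ u hu hu' => hpd y u hu hu' (by rw [hp0, mul_zero])⟩
    have hpz : p ∉ nonZeroDivisors A[X] := by
      intro hreg
      have hc0 : c = 0 := by simpa using (mem_nonZeroDivisors_iff_right.1 hreg) _ hcp
      exact hf0 (by rw [hfg, hc0, C_0, zero_mul])
    obtain ⟨d, q, -, hq, hpq⟩ := hA p hp0 ⟨0, fun i => (hp i).1⟩ hpz
    refine ⟨d, ?_, fun y hy u hu hu' => hpd y u hu hu' ?_⟩
    · rw [hpq, ← mul_assoc, ← C_mul] at hcp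
      exact C_eq_zero.1 ((mem_nonZeroDivisors_iff_right.1 hq) _ hcp)
    · rw [hpq, ← mul_assoc, ← C_mul, hy, C_0, zero_mul]
  -- The coefficients of `g` above `n` are replaced by the two elements `d` and `h`.
  obtain ⟨g', hdeg, hg'⟩ := exists_coeff_eq (n + 2)
    (fun i => if i ≤ n then g.coeff i else if i = n + 1 then d else h)
  refine ⟨c, g', hc, ?_, ?_, hdeg⟩
  · refine mem_nonZeroDivisors_of_coeff _ fun y hy => eq_zero_of_pow_mul_coeff hg y fun i => ?_
    have hrad : ∀ (a : A) (k : ℕ), a ^ k * y = 0 →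
        a ∈ (Ideal.span {y}).annihilator.radical := fun a k hk =>
      ⟨k, (Submodule.mem_annihilator_span_singleton _ _).2 (by simpa using hk)⟩
    have hyd : y * d = 0 := by simpa [hg'] using hy (n + 1)
    have hyh : y * h = 0 := by simpa [hg'] using hy (n + 2)
    by_cases hi : i ≤ n
    · have := hy i
      rw [hg', if_pos (by omega), if_pos hi] at this
      exact hrad _ 1 (by rw [pow_one, mul_comm, this])
    · refine hUspan _ (fun u hu => ?_) i (not_le.1 hi)
      by_cases hu' : ∃ ρ, u ∈ 𝒜 ρ ∧ addOrderOf ρ = 0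
      · obtain ⟨k, hk⟩ := hh y hyh u (Finset.mem_filter.2 ⟨hu, hu'⟩)
        exact hrad u k hk
      · exact hrad u (m u) (hd y hyd u hu hu')
  · ext i
    rw [Polynomial.coeff_C_mul, hg']
    split_ifs with h1 h2 h3
    · exact hcoeff i
    · rw [hcd, hfn i (by omega)]
    · rw [hch, hfn i (by omega)]
    · rw [mul_zero, hfn i (by omega)]

/-! ### Polynomials over a product of rings -/

section Pi

variable {I : Type*} {R : I → Type*} [∀ α, CommRing (R α)]

lemma pi_poly_ext {p q : (∀ α, R α)[X]}
    (h : ∀ α, p.map (Pi.evalRingHom R α) = q.map (Pi.evalRingHom R α)) : p = q := by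
  ext i α
  simpa using congrArg (fun r => r.coeff i) (h α)

/-- A family of polynomials of uniformly bounded degree comes from a polynomial over the product
ring. -/
lemma exists_pi_poly (N : ℕ) (F : ∀ α, (R α)[X]) (hF : ∀ α, (F α).natDegree ≤ N) :
    ∃ p : (∀ α, R α)[X], ∀ α, p.map (Pi.evalRingHom R α) = F α := by
  obtain ⟨p, -, hp⟩ := exists_coeff_eq N (fun i α => (F α).coeff i)
  refine ⟨p, fun α => ?_⟩
  ext i
  rw [Polynomial.coeff_map, hp]
  split_ifs with h
  · rfl
  · rw [Polynomial.coeff_eq_zero_of_natDegree_lt ((hF α).trans_lt (not_le.1 h)), map_zero]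

lemma pi_poly_mem_nonZeroDivisors_iff (p : (∀ α, R α)[X]) :
    p ∈ nonZeroDivisors (∀ α, R α)[X] ↔
      ∀ α, p.map (Pi.evalRingHom R α) ∈ nonZeroDivisors (R α)[X] := by
  classical
  simp only [mem_nonZeroDivisors_iff_right]
  constructor
  · intro hp α q hq
    obtain ⟨r, hr⟩ := exists_pi_poly q.natDegree (Pi.single α q : ∀ β, (R β)[X]) (by
      intro β
      by_cases h : β = α
      · subst h; simp
      · simp [Pi.single_eq_of_ne h])
    have : r * p = 0 := by
      refine pi_poly_ext fun β => ?_
      rw [Polynomial.map_mul, hr, Polynomial.map_zero]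
      by_cases h : β = α
      · subst h; simpa using hq
      · simp [Pi.single_eq_of_ne h]
    have h0 := hr α
    rw [hp r this, Polynomial.map_zero, Pi.single_eq_same] at h0
    exact h0.symm
  · intro hp q hq
    refine pi_poly_ext fun α => ?_
    rw [Polynomial.map_zero]
    refine hp α _ ?_
    rw [← Polynomial.map_mul, hq, Polynomial.map_zero]

end Pi

/-- For a family `{R_α}` of `G`-graded rings, the product `Π R_α` with the
product grading `(Π R_α)_σ = Π (R_α)_σ` is EM-`G`-graded iff each `R_α` is. -/
theorem stmt_15 {I G : Type*} [AddGroup G] [DecidableEq G]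
    (R : I → Type*) [∀ α, CommRing (R α)]
    (𝒜 : ∀ α, G → AddSubgroup (R α)) [∀ α, GradedRing (𝒜 α)] :
    IsEMGGraded (fun σ : G => AddSubgroup.pi Set.univ (fun α => 𝒜 α σ)) ↔
      ∀ α, IsEMGGraded (𝒜 α) := by
  classical
  constructor
  · intro hR α f hf0 ⟨σ, hσ⟩ hfz
    obtain ⟨F, hF⟩ := exists_pi_poly f.natDegree (Pi.single α f : ∀ β, (R β)[X]) (by
      intro β
      by_cases h : β = α
      · subst h; simp
      · simp [Pi.single_eq_of_ne h])
    have hFα : F.map (Pi.evalRingHom R α) = f := by rw [hF, Pi.single_eq_same]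
    obtain ⟨c, g, -, hg, hcg⟩ := hR F
      (by rintro rfl; exact hf0 (by rw [← hFα, Polynomial.map_zero]))
      ⟨σ, fun i => by
        rw [AddSubgroup.mem_pi]
        intro β _
        have : F.coeff i β = (F.map (Pi.evalRingHom R β)).coeff i := by simp
        rw [this, hF]
        by_cases h : β = α
        · subst h; simpa using hσ i
        · simp [Pi.single_eq_of_ne h]⟩
      (fun h => hfz (by rw [← hFα]; exact (pi_poly_mem_nonZeroDivisors_iff F).1 h α))
    have hgα := (pi_poly_mem_nonZeroDivisors_iff g).1 hg α
    have hfα : f = C (c α) * g.map (Pi.evalRingHom R α) := by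
      rw [← hFα, hcg, Polynomial.map_mul, Polynomial.map_C]
      rfl
    refine ⟨c α, _, fun hc => hfz ?_, hgα, hfα⟩
    rw [hfα]
    refine mul_mem (mem_nonZeroDivisors_of_coeff _ fun y hy => ?_) hgα
    exact (mem_nonZeroDivisors_iff_right.1 hc) y (by simpa using hy 0)
  · intro hR f hf0 ⟨σ, hσ⟩ hfz
    have hdeg : ∀ α, (f.map (Pi.evalRingHom R α)).natDegree ≤ f.natDegree := fun α =>
      Polynomial.natDegree_map_le
    have key : ∀ α, ∃ (c : R α) (g : (R α)[X]), g ∈ nonZeroDivisors (R α)[X] ∧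
        f.map (Pi.evalRingHom R α) = C c * g ∧ g.natDegree ≤ f.natDegree + 2 ∧
        (f.map (Pi.evalRingHom R α) ∉ nonZeroDivisors (R α)[X] → c ∉ nonZeroDivisors (R α)) := by
      intro α
      by_cases hz : f.map (Pi.evalRingHom R α) ∈ nonZeroDivisors (R α)[X]
      · exact ⟨1, _, hz, by simp, (hdeg α).trans (by omega), fun h => absurd hz h⟩
      by_cases h0 : f.map (Pi.evalRingHom R α) = 0
      · refine ⟨0, 1, one_mem _, by simpa using h0, by simp, fun _ hc => hz ?_⟩
        rw [h0, ← C_0]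
        refine mem_nonZeroDivisors_of_coeff _ fun y hy => ?_
        exact (mem_nonZeroDivisors_iff_right.1 hc) y (mul_zero y)
      obtain ⟨c, g, hc, hg, hcg, hd⟩ := (hR α).exists_bounded (𝒜 α) _ h0
        ⟨σ, fun i => by
          have := (AddSubgroup.mem_pi _).1 (hσ i) α (Set.mem_univ α)
          simpa using this⟩ hz (hdeg α)
      exact ⟨c, g, hg, hcg, hd, fun _ => hc⟩
    choose c g hg hcg hd hc using key
    obtain ⟨g', hg'⟩ := exists_pi_poly _ g hd
    refine ⟨c, g', fun hcreg => ?_, ?_, ?_⟩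
    · obtain ⟨α, hα⟩ := not_forall.1 (mt (pi_poly_mem_nonZeroDivisors_iff f).2 hfz)
      refine hc α hα (mem_nonZeroDivisors_iff_right.2 fun y hy => ?_)
      have := (mem_nonZeroDivisors_iff_right.1 hcreg) (Pi.single α y) (by
        rw [← Pi.single_mul_left, hy, Pi.single_zero])
      simpa using this
    · exact (pi_poly_mem_nonZeroDivisors_iff g').2 fun α => by rw [hg']; exact hg α
    · refine pi_poly_ext fun α => ?_
      rw [hcg, Polynomial.map_mul, Polynomial.map_C, hg']
      rfl
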